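/- arXiv:2305.04907 — 2 statements merged into one kernel-verified Lean document; each statement's English description precedes it below -/
import Mathlib

section
/- If S is a blocking semioval with exactly 25 points in PG(2,11), then every line of PG(2,11) meets S in at most 6 points. -/
instance : Fact (Nat.Prime 11) := ⟨by norm_num⟩

/-- The points of `PG(2,11)`: the projectivization of `(ZMod 11)^3`. -/
abbrev PGPoint : Type := Projectivization (ZMod 11) (Fin 3 → ZMod 11)

/-- The lines of `PG(2,11)`: the 2-dimensional subspaces of `(ZMod 11)^3`. -/
abbrev PGLine : Type :=
  {W : Submodule (ZMod 11) (Fin 3 → ZMod 11) // Module.finrank (ZMod 11) W = 2}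

/-- Incidence: a point lies on a line when its representing 1-dimensional
subspace is contained in the line's 2-dimensional subspace. -/
def PGmem (P : PGPoint) (L : PGLine) : Prop := Projectivization.submodule P ≤ L.val

/-- The set of points lying on a line. -/
def linePts (L : PGLine) : Set PGPoint := {P | PGmem P L}

/-- The set of points of `S` lying on the line `L`. -/
def secantPts (S : Set PGPoint) (L : PGLine) : Set PGPoint := {P ∈ S | PGmem P L}

/-- A line is a `k`-secant to `S` if it meets `S` in exactly `k` points. -/
def IsSecant (S : Set PGPoint) (k : ℕ) (L : PGLine) : Prop := (secantPts S L).ncard = k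

/-- A tangent line to `S` is a 1-secant. -/
def IsTangent (S : Set PGPoint) (L : PGLine) : Prop := IsSecant S 1 L

/-- A blocking set: every line meets `S`, but `S` contains no line. -/
def IsBlockingSet (S : Set PGPoint) : Prop :=
  (∀ L : PGLine, (secantPts S L).Nonempty) ∧ ∀ L : PGLine, ¬ linePts L ⊆ S

/-- A semioval: every point of `S` lies on exactly one tangent line to `S`. -/
def IsSemioval (S : Set PGPoint) : Prop :=
  ∀ P ∈ S, ∃! L : PGLine, PGmem P L ∧ IsTangent S L

/-- A blocking semioval is both a blocking set and a semioval. -/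
def IsBlockingSemioval (S : Set PGPoint) : Prop := IsBlockingSet S ∧ IsSemioval S

open Configuration
open scoped LinearAlgebra.Projectivization

section Counting

open Finset

variable {P L : Type*} [Membership P L] [ProjectivePlane P L]
  [∀ (p : P) (l : L), Decidable (p ∈ l)]

/-- Every point `Q` of `l` outside `S` carries at least `2 * n - #(S \ l)` tangents, where `n` is
the order of the plane; double counting these tangents gives the inequality. -/
theorem card_sdiff_mul_two_order_le [Fintype P] [Fintype L] [DecidableEq P]
    {S : Finset P} (hblock : ∀ l : L, ∃ p ∈ S, p ∈ l)
    (hsemi : ∀ p ∈ S, ∃! l : L, p ∈ l ∧ #{r ∈ S | r ∈ l} = 1) (l : L) :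
    #{p | p ∈ l ∧ p ∉ S} * (2 * ProjectivePlane.order P L) ≤
      (#{p | p ∈ l ∧ p ∉ S} + 1) * #{p ∈ S | p ∉ l} := by
  classical
  set A : Finset P := {p ∈ S | p ∉ l} with hA
  set T : Finset P := {p | p ∈ l ∧ p ∉ S} with hT
  let B (Q : P) : Finset P := {p ∈ A | ∃ m : L, Q ∈ m ∧ p ∈ m ∧ #{r ∈ S | r ∈ m} = 1}
  have hB : ∑ Q ∈ T, #(B Q) ≤ #A := by
    rw [← card_biUnion]
    · exact card_le_card (biUnion_subset.2 fun Q _ => filter_subset _ _)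
    · intro Q hQ Q' hQ' hne
      refine disjoint_left.2 fun p hp hp' => ?_
      simp only [B, hA, hT, mem_filter, mem_univ, true_and, SetLike.mem_coe]
        at hp hp' hQ hQ'
      obtain ⟨⟨hpS, hpl⟩, m, hQm, hpm, hm⟩ := hp
      obtain ⟨-, m', hQm', hpm', hm'⟩ := hp'
      obtain rfl := (hsemi p hpS).unique ⟨hpm, hm⟩ ⟨hpm', hm'⟩
      obtain h | rfl := Nondegenerate.eq_or_eq hQm hQm' hQ.1 hQ'.1
      · exact hne h
      · exact hpl hpm
  have hQ : ∀ Q ∈ T, 2 * ProjectivePlane.order P L ≤ #A + #(B Q) := by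
    intro Q hQ
    simp only [hT, mem_filter, mem_univ, true_and] at hQ
    obtain ⟨hQl, hQS⟩ := hQ
    let M : Finset L := ({m | Q ∈ m} : Finset L).erase l
    have hM : #M = ProjectivePlane.order P L := by
      have h := ProjectivePlane.lineCount_eq L Q
      rw [lineCount, Nat.card_eq_fintype_card, Fintype.card_subtype] at h
      rw [card_erase_of_mem (by simpa using hQl), h, Nat.add_sub_cancel]
    have hsum : ∀ X ⊆ A, ∑ m ∈ M, #{p ∈ X | p ∈ m} ≤ #X := by
      intro X hX
      rw [← card_biUnion]
      · exact card_le_card (biUnion_subset.2 fun m _ => filter_subset _ _)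
      · intro m hm m' hm' hne
        refine disjoint_left.2 fun p hp hp' => ?_
        simp only [M, coe_erase, coe_filter, mem_univ, true_and, Set.mem_sdiff, Set.mem_ofPred_eq]
          at hm hm'
        rw [mem_filter] at hp hp'
        obtain rfl | h := Nondegenerate.eq_or_eq hp.2 hm.1 hp'.2 hm'.1
        · exact (mem_filter.1 (hX hp.1)).2 hQl
        · exact hne h
    have htwo : ∀ m ∈ M, 2 ≤ #{p ∈ A | p ∈ m} + #{p ∈ B Q | p ∈ m} := by
      intro m hm
      simp only [M, mem_erase, mem_filter, mem_univ, true_and] at hm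
      have hAm : ({p ∈ A | p ∈ m} : Finset P) = {p ∈ S | p ∈ m} := by
        ext p
        simp only [hA, mem_filter]
        refine ⟨fun h => ⟨h.1.1, h.2⟩, fun h => ⟨⟨h.1, fun hpl => ?_⟩, h.2⟩⟩
        obtain rfl | h' := Nondegenerate.eq_or_eq h.2 hm.2 hpl hQl
        · exact hQS h.1
        · exact hm.1 h'
      obtain ⟨p, hpS, hpm⟩ := hblock m
      have hp : p ∈ ({p ∈ A | p ∈ m} : Finset P) := by
        rw [hAm]
        exact mem_filter.2 ⟨hpS, hpm⟩
      have hpos := card_pos.2 ⟨p, hp⟩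
      by_cases h1 : #{r ∈ S | r ∈ m} = 1
      · have : p ∈ ({p ∈ B Q | p ∈ m} : Finset P) :=
          mem_filter.2 ⟨mem_filter.2 ⟨(mem_filter.1 hp).1, m, hm.2, hpm, h1⟩, hpm⟩
        have := card_pos.2 ⟨p, this⟩
        omega
      · rw [← hAm] at h1
        omega
    calc 2 * ProjectivePlane.order P L = ∑ m ∈ M, 2 := by rw [sum_const, hM, smul_eq_mul, mul_comm]
      _ ≤ ∑ m ∈ M, (#{p ∈ A | p ∈ m} + #{p ∈ B Q | p ∈ m}) := sum_le_sum htwo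
      _ ≤ #A + #(B Q) := by
        rw [sum_add_distrib]
        exact add_le_add (hsum A subset_rfl) (hsum (B Q) (filter_subset _ _))
  calc #T * (2 * ProjectivePlane.order P L) = ∑ Q ∈ T, 2 * ProjectivePlane.order P L := by
        rw [sum_const, smul_eq_mul]
    _ ≤ ∑ Q ∈ T, (#A + #(B Q)) := sum_le_sum hQ
    _ ≤ (#T + 1) * #A := by
      rw [sum_add_distrib, sum_const, smul_eq_mul, add_mul, one_mul]
      exact Nat.add_le_add_left hB _

/-- The elements of a finite set with at least two elements can be covered by pairs. -/
theorem exists_cover_by_pairs {α : Type*} {X : Finset α} {m : ℕ} (hX : 2 ≤ #X)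
    (hm : #X ≤ 2 * m) :
    ∃ f g : Fin m → α, (∀ j, f j ∈ X ∧ g j ∈ X ∧ f j ≠ g j) ∧ ∀ x ∈ X, ∃ j, x = f j ∨ x = g j := by
  have hpos : 0 < #X := by omega
  let e (i : ℕ) : α := (X.equivFin.symm ⟨i % #X, Nat.mod_lt _ hpos⟩ : X)
  refine ⟨fun j => e (2 * j), fun j => e (2 * j + 1),
    fun j => ⟨Subtype.prop _, Subtype.prop _, fun h => ?_⟩, fun x hx => ?_⟩
  · have h' : (2 * (j : ℕ)) % #X = (2 * (j : ℕ) + 1) % #X := by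
      simpa [e, Subtype.coe_inj] using h
    have h2 : #X ∣ 1 := by
      simpa using (Nat.modEq_iff_dvd' (Nat.le_succ (2 * (j : ℕ)))).1 h'
    have := Nat.le_of_dvd one_pos h2
    omega
  · obtain ⟨i, hi⟩ : ∃ i : Fin #X, (X.equivFin.symm i : α) = x :=
      ⟨X.equivFin ⟨x, hx⟩, by simp⟩
    have he : e i = x := by simp [e, Nat.mod_eq_of_lt i.isLt, hi]
    refine ⟨⟨(i : ℕ) / 2, by omega⟩, ?_⟩
    obtain h | h := Nat.mod_two_eq_zero_or_one (i : ℕ)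
    · exact Or.inl (he.symm.trans (congrArg e (by dsimp only; omega)))
    · exact Or.inr (he.symm.trans (congrArg e (by dsimp only; omega)))

/-- The lines other than `l` missed by `S \ l` are tangents at the points of `S ∩ l`, so the
intersection points of pairs of these tangents complete `S \ l` to an affine blocking set. -/
theorem exists_affine_completion {S : Finset P} (hblock : ∀ l : L, ∃ p ∈ S, p ∈ l)
    (hsemi : ∀ p ∈ S, ∃! l : L, p ∈ l ∧ #{r ∈ S | r ∈ l} = 1) {l : L} {m : ℕ}
    (hl : 2 ≤ #{p ∈ S | p ∈ l}) (hm : #{p ∈ S | p ∈ l} ≤ 2 * m) :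
    ∃ b : Fin m → P, (∀ j, b j ∉ l) ∧
      ∀ k : L, k ≠ l → (∃ p ∈ S, p ∉ l ∧ p ∈ k) ∨ ∃ j, b j ∈ k := by
  obtain ⟨f, g, hfg, hcover⟩ := exists_cover_by_pairs hl hm
  simp only [mem_filter] at hfg hcover
  have hmeet : ∀ j, ∃ b : P, b ∉ l ∧
      ∀ k : L, #{r ∈ S | r ∈ k} = 1 → f j ∈ k ∨ g j ∈ k → b ∈ k := by
    intro j
    obtain ⟨⟨hfS, hfl⟩, ⟨hgS, hgl⟩, hne⟩ := hfg j
    obtain ⟨s, ⟨hfs, hs⟩, hsu⟩ := hsemi _ hfS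
    obtain ⟨t, ⟨hgt, ht⟩, htu⟩ := hsemi _ hgS
    have hsl : s ≠ l := by rintro rfl; omega
    have htl : t ≠ l := by rintro rfl; omega
    have hst : s ≠ t := by
      rintro rfl
      exact (Nondegenerate.eq_or_eq hfs hgt hfl hgl).elim hne hsl
    obtain ⟨hbs, hbt⟩ := HasPoints.mkPoint_ax (P := P) hst
    refine ⟨HasPoints.mkPoint hst, fun hbl => ?_, fun k hk hfgk => ?_⟩
    · have h1 := (Nondegenerate.eq_or_eq hbs hfs hbl hfl).resolve_right hsl
      have h2 := (Nondegenerate.eq_or_eq hbt hgt hbl hgl).resolve_right htl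
      exact hne (h1.symm.trans h2)
    · obtain h | h := hfgk
      · exact hsu k ⟨h, hk⟩ ▸ hbs
      · exact htu k ⟨h, hk⟩ ▸ hbt
  choose b hbl hb using hmeet
  refine ⟨b, hbl, fun k hkl => or_iff_not_imp_left.2 fun hk => ?_⟩
  push Not at hk
  obtain ⟨p, hpS, hpk⟩ := hblock k
  have hpl : p ∈ l := by_contra fun h => hk p hpS h hpk
  have hk1 : #{r ∈ S | r ∈ k} = 1 := by
    refine card_eq_one.2 ⟨p, eq_singleton_iff_unique_mem.2 ⟨mem_filter.2 ⟨hpS, hpk⟩, ?_⟩⟩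
    intro r hr
    rw [mem_filter] at hr
    have hrl : r ∈ l := by_contra fun h => hk r hr.1 h hr.2
    exact (Nondegenerate.eq_or_eq hr.2 hpk hrl hpl).resolve_right hkl
  obtain ⟨j, rfl | rfl⟩ := hcover p ⟨hpS, hpl⟩
  · exact ⟨j, hb j k hk1 (Or.inl hpk)⟩
  · exact ⟨j, hb j k hk1 (Or.inr hpk)⟩

end Counting

section Affine

open MvPolynomial Projectivization

variable {K : Type*} [Field K] [Fintype K]

/-- Jamison's theorem: `2 * (q - 1)` points off a line `l` of the projective plane over a field
with `q` elements cannot block all the other lines. -/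
theorem not_affine_blocking {ι : Type*} [Fintype ι] (hι : Fintype.card ι = 2 * (Fintype.card K - 1))
    (a : ι → ℙ K (Fin 3 → K)) (l : ℙ K (Fin 3 → K)) (ha : ∀ i, ¬ (a i).orthogonal l)
    (hblock : ∀ k, k ≠ l → ∃ i, (a i).orthogonal k) : False := by
  classical
  have horth (i : ι) {x : Fin 3 → K} (hx : x ≠ 0) :
      (a i).orthogonal (mk K x hx) ↔ (a i).rep ⬝ᵥ x = 0 := by
    conv_lhs => rw [← mk_rep (a i)]
    exact orthogonal_mk _ _
  have hq : 1 < Fintype.card K := Fintype.one_lt_card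
  let G : MvPolynomial (Fin 3) K := ∏ i, ∑ j, C ((a i).rep j) * X j
  have hG (x : Fin 3 → K) : eval x G = ∏ i, (a i).rep ⬝ᵥ x := by
    simp [G, dotProduct, map_prod]
  have hdeg : G.totalDegree < (Fintype.card K - 1) * Fintype.card (Fin 3) := by
    have hle : G.totalDegree ≤ ∑ _i : ι, 1 := by
      refine (totalDegree_finsetProd _ _).trans (Finset.sum_le_sum fun i _ => ?_)
      refine totalDegree_finsetSum_le fun j _ => (totalDegree_mul _ _).trans ?_
      simp
    simp only [Finset.sum_const, Finset.card_univ, smul_eq_mul, mul_one, hι] at hle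
    rw [Fintype.card_fin]
    omega
  have hsum := MvPolynomial.sum_eval_eq_zero G hdeg
  have hl0 : eval l.rep G ≠ 0 := by
    rw [hG, Finset.prod_ne_zero_iff]
    intro i _ h
    apply ha i
    rw [← mk_rep l]
    exact (horth i l.rep_nonzero).2 h
  have hsmul (c : Kˣ) : eval (c • l.rep) G = eval l.rep G := by
    have hc : c ^ Fintype.card ι = 1 := by
      rw [hι, mul_comm, pow_mul, ← Fintype.card_units, pow_card_eq_one, one_pow]
    rw [hG, hG]
    simp only [dotProduct_smul, Units.smul_def, smul_eq_mul]
    rw [Finset.prod_mul_distrib, Finset.prod_const, Finset.card_univ, ← Units.val_pow_eq_pow_val,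
      hc, Units.val_one, one_mul]
  have hι0 : Nonempty ι := Fintype.card_pos_iff.1 (by omega)
  have hzero (x : Fin 3 → K) (hx : x ∉ Set.range fun c : Kˣ => c • l.rep) : eval x G = 0 := by
    rw [hG]
    by_cases hx0 : x = 0
    · simp [hx0]
    · obtain ⟨i, hi⟩ := hblock (mk K x hx0) (by
        rintro h
        rw [← mk_rep l, mk_eq_mk_iff] at h
        exact hx h)
      exact Finset.prod_eq_zero (Finset.mem_univ i) ((horth i hx0).1 hi)
  have hinj : Function.Injective fun c : Kˣ => c • l.rep := by
    intro c d h
    exact Units.ext (smul_left_injective K l.rep_nonzero h)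
  have hval : ∑ c : Kˣ, eval (c • l.rep) G = ∑ x, eval x G :=
    Fintype.sum_of_injective _ hinj _ _ (fun x hx => hzero x hx) fun _ => rfl
  rw [hsum] at hval
  simp only [hsmul, Finset.sum_const, Finset.card_univ, Fintype.card_units, nsmul_eq_mul] at hval
  rw [Nat.cast_sub hq.le, FiniteField.cast_card_eq_zero] at hval
  simp [hl0] at hval

theorem order_eq_card [DecidableEq K] :
    ProjectivePlane.order (ℙ K (Fin 3 → K)) (ℙ K (Fin 3 → K)) = Fintype.card K := by
  have := Fintype.ofFinite (ℙ K (Fin 3 → K))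
  have h := ProjectivePlane.card_points (ℙ K (Fin 3 → K)) (ℙ K (Fin 3 → K))
  rw [← Nat.card_eq_fintype_card, card_of_finrank (n := 3) K (Fin 3 → K) (by simp)] at h
  simp only [Finset.sum_range_succ, Nat.card_eq_fintype_card, Finset.sum_range_zero] at h
  nlinarith

open Classical in
theorem card_filter_mem_le_six (hK : Fintype.card K = 11) {S : Finset (ℙ K (Fin 3 → K))}
    (hcard : S.card = 25) (hblock : ∀ l : ℙ K (Fin 3 → K), ∃ p ∈ S, p ∈ l)
    (hsemi : ∀ p ∈ S, ∃! l : ℙ K (Fin 3 → K), p ∈ l ∧ (S.filter (· ∈ l)).card = 1)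
    {l : ℙ K (Fin 3 → K)} (hl : ∃ p ∈ l, p ∉ S) : (S.filter (· ∈ l)).card ≤ 6 := by
  have := Fintype.ofFinite (ℙ K (Fin 3 → K))
  have hcount := card_sdiff_mul_two_order_le hblock hsemi l
  rw [order_eq_card, hK] at hcount
  have hcompl : (Finset.univ.filter fun p => p ∈ l ∧ p ∉ S).card +
      (S.filter (· ∈ l)).card = 12 := by
    have h := ProjectivePlane.pointCount_eq (ℙ K (Fin 3 → K)) l
    rw [order_eq_card, hK, pointCount, Nat.card_eq_fintype_card, Fintype.card_subtype,
      ← Finset.card_filter_add_card_filter_not (fun p => p ∉ S), Finset.filter_filter,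
      Finset.filter_filter] at h
    refine Eq.trans (congrArg _ (congrArg Finset.card ?_)) h
    ext p
    simp [and_comm]
  have hpos : 0 < (Finset.univ.filter fun p => p ∈ l ∧ p ∉ S).card := by
    obtain ⟨p, hp⟩ := hl
    exact Finset.card_pos.2 ⟨p, by simpa using hp⟩
  have hsplit : (S.filter (· ∈ l)).card + (S.filter (· ∉ l)).card = 25 := by
    rw [Finset.card_filter_add_card_filter_not, hcard]
  by_contra! hlt
  obtain h | h : (S.filter (· ∈ l)).card ≤ 9 ∨ 10 ≤ (S.filter (· ∈ l)).card := by omega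
  · generalize (S.filter (· ∈ l)).card = k at *
    rw [show Finset.card _ = 12 - k by omega, show (S.filter (· ∉ l)).card = 25 - k by omega]
      at hcount
    interval_cases k <;> omega
  · obtain ⟨b, hb, hcover⟩ := exists_affine_completion hblock hsemi (l := l)
      (m := (S.filter (· ∈ l)).card - 5) (by omega) (by omega)
    refine not_affine_blocking (ι := S.filter (· ∉ l) ⊕ Fin ((S.filter (· ∈ l)).card - 5)) ?_
      (Sum.elim Subtype.val b) l ?_ ?_
    · rw [Fintype.card_sum, Fintype.card_coe, Fintype.card_fin, hK]
      omega
    · rintro (p | j)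
      · exact (Finset.mem_filter.1 p.2).2
      · exact hb j
    · intro k hk
      obtain ⟨p, hpS, hpl, hpk⟩ | ⟨j, hj⟩ := hcover k hk
      · exact ⟨Sum.inl ⟨p, Finset.mem_filter.2 ⟨hpS, hpl⟩⟩, hpk⟩
      · exact ⟨Sum.inr j, hj⟩

end Affine

section Polarity

open Projectivization

/-- The line of `PG(2,11)` polar to a point under the standard dot product. -/
noncomputable def polarLine (R : PGPoint) : PGLine :=
  ⟨LinearMap.ker (dotProductEquiv (ZMod 11) (Fin 3) R.rep), by
    have h := Module.Dual.finrank_ker_add_one_of_ne_zero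
      ((dotProductEquiv (ZMod 11) (Fin 3)).map_ne_zero_iff.2 R.rep_nonzero)
    rw [Module.finrank_fin_fun] at h
    omega⟩

theorem pgMem_polarLine {P R : PGPoint} : PGmem P (polarLine R) ↔ P.orthogonal R := by
  rw [orthogonal_comm]
  conv_rhs => rw [← mk_rep P, ← mk_rep R, orthogonal_mk]
  simp [PGmem, polarLine, submodule_eq, Submodule.span_singleton_le_iff_mem]

theorem polarLine_injective : Function.Injective polarLine := by
  intro R R' h
  have hmem : ∀ P : PGPoint, P ∈ R ↔ P ∈ R' := fun P => by
    rw [ofField.mem_iff, ofField.mem_iff, ← pgMem_polarLine, ← pgMem_polarLine, h]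
  have hR := (ProjectivePlane.two_lt_pointCount PGPoint R)
  have : Nontrivial {P : PGPoint // P ∈ R} := Finite.one_lt_card_iff_nontrivial.1 (by
    rw [pointCount] at hR; omega)
  obtain ⟨P, P', hne⟩ := exists_pair_ne {P : PGPoint // P ∈ R}
  exact (Nondegenerate.eq_or_eq P.2 P'.2 ((hmem _).1 P.2) ((hmem _).1 P'.2)).resolve_left
    fun h => hne (Subtype.ext h)

theorem polarLine_surjective : Function.Surjective polarLine := by
  rintro ⟨W, hW⟩
  have hlt : W < ⊤ := by
    rw [lt_top_iff_ne_top]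
    rintro rfl
    simp at hW
  obtain ⟨f, hf, hle⟩ := W.exists_le_ker_of_lt_top hlt
  obtain ⟨x, rfl⟩ := (dotProductEquiv (ZMod 11) (Fin 3)).surjective f
  have hx : x ≠ 0 := (dotProductEquiv (ZMod 11) (Fin 3)).map_ne_zero_iff.1 hf
  refine ⟨mk (ZMod 11) x hx, Subtype.ext (Eq.symm ?_)⟩
  refine Submodule.eq_of_le_of_finrank_eq (fun v hv => ?_) (hW.trans (polarLine _).2.symm)
  obtain ⟨c, hc⟩ := exists_smul_eq_mk_rep (ZMod 11) x hx
  have hxv : x ⬝ᵥ v = 0 := hle hv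
  simp [polarLine, ← hc, Units.smul_def, hxv]

end Polarity

theorem every_line_at_most_6 (S : Set PGPoint) (hS : IsBlockingSemioval S) (hcard : S.ncard = 25) (L : PGLine) :
    (secantPts S L).ncard ≤ 6 := by
  classical
  obtain ⟨R, rfl⟩ := polarLine_surjective L
  obtain ⟨S, rfl⟩ := S.toFinite.exists_finset_coe
  have hsec (Q : PGPoint) : (secantPts S (polarLine Q)).ncard = (S.filter (· ∈ Q)).card := by
    rw [← Set.ncard_coe_finset]
    congr 1
    ext P
    simp [secantPts, pgMem_polarLine, ofField.mem_iff]
  obtain ⟨⟨hblock, hline⟩, hsemi⟩ := hS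
  replace hblock : ∀ Q : PGPoint, ∃ P ∈ S, P ∈ Q := fun Q => by
    obtain ⟨P, hPS, hPQ⟩ := hblock (polarLine Q)
    exact ⟨P, hPS, pgMem_polarLine.1 hPQ⟩
  replace hsemi : ∀ P ∈ S, ∃! Q : PGPoint, P ∈ Q ∧ (S.filter (· ∈ Q)).card = 1 := fun P hP => by
    obtain ⟨M, ⟨hPM, hM⟩, hu⟩ := hsemi P hP
    obtain ⟨Q, rfl⟩ := polarLine_surjective M
    refine ⟨Q, ⟨pgMem_polarLine.1 hPM, (hsec Q).symm.trans hM⟩, fun Q' hQ' => ?_⟩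
    exact polarLine_injective (hu _ ⟨pgMem_polarLine.2 hQ'.1, (hsec Q').trans hQ'.2⟩)
  rw [hsec]
  obtain ⟨P, hP, hPS⟩ := Set.not_subset.1 (hline (polarLine R))
  rw [Set.ncard_coe_finset] at hcard
  exact card_filter_mem_le_six (ZMod.card 11) hcard hblock hsemi ⟨P, pgMem_polarLine.1 hP, hPS⟩
end

section
/- The following 26-element set of points of PG(2,11), given by homogeneous coordinates, is a blocking semioval: {(1,1,0), (1,2,0), (1,3,0), (1,4,0), (1,5,0), (1,6,0), (1,7,0), (1,8,0), (1,9,0), (1,10,0), (0,0,1), (1,0,2), (1,0,6), (1,0,7), (1,0,8), (1,0,10), (1,1,3), (1,2,3), (1,3,5), (1,4,4), (1,5,9), (1,6,5), (1,7,1), (1,8,4), (1,9,1), (1,10,9)}. -/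
/-- The point of `PG(2,11)` with homogeneous coordinates `(x, y, z)`. -/
def pt (x y z : ZMod 11) (h : ![x, y, z] ≠ 0 := by decide) : PGPoint :=
  Projectivization.mk (ZMod 11) ![x, y, z] h

/-- The 26-point set from Table 2. -/
def B26 : Set PGPoint :=
  {pt 1 1 0, pt 1 2 0, pt 1 3 0, pt 1 4 0, pt 1 5 0, pt 1 6 0, pt 1 7 0, pt 1 8 0,
   pt 1 9 0, pt 1 10 0, pt 0 0 1, pt 1 0 2, pt 1 0 6, pt 1 0 7, pt 1 0 8, pt 1 0 10,
   pt 1 1 3, pt 1 2 3, pt 1 3 5, pt 1 4 4, pt 1 5 9, pt 1 6 5, pt 1 7 1, pt 1 8 4,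
   pt 1 9 1, pt 1 10 9}

/-- The line with equation `a ⬝ᵥ v = 0`. -/
def lineOfNormal (a : Fin 3 → ZMod 11) (ha : a ≠ 0) : PGLine :=
  ⟨LinearMap.ker (dotProductEquiv (ZMod 11) (Fin 3) a), by
    have h := Module.Dual.finrank_ker_add_one_of_ne_zero
      (f := dotProductEquiv (ZMod 11) (Fin 3) a) (by simpa using ha)
    simpa using h⟩

theorem mem_lineOfNormal {a : Fin 3 → ZMod 11} (ha : a ≠ 0) (v : Fin 3 → ZMod 11) :
    v ∈ (lineOfNormal a ha).val ↔ a ⬝ᵥ v = 0 := by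
  simp [lineOfNormal]

/-- A vector is normalized if its first nonzero coordinate is `1`. -/
def IsNormalized (a : Fin 3 → ZMod 11) : Prop :=
  a 0 = 1 ∨ (a 0 = 0 ∧ a 1 = 1) ∨ (a 0 = 0 ∧ a 1 = 0 ∧ a 2 = 1)

instance : DecidablePred IsNormalized := fun a =>
  inferInstanceAs (Decidable
    (a 0 = 1 ∨ (a 0 = 0 ∧ a 1 = 1) ∨ (a 0 = 0 ∧ a 1 = 0 ∧ a 2 = 1)))

namespace IsNormalized

theorem ne_zero {a : Fin 3 → ZMod 11} (ha : IsNormalized a) : a ≠ 0 := by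
  rintro rfl
  simp [IsNormalized] at ha

theorem forall_iff {p : (Fin 3 → ZMod 11) → Prop} :
    (∀ a, IsNormalized a → p a) ↔
      (∀ b c, p ![1, b, c]) ∧ (∀ c, p ![0, 1, c]) ∧ p ![0, 0, 1] := by
  constructor
  · intro h
    exact ⟨fun b c => h _ (by simp [IsNormalized]), fun c => h _ (by simp [IsNormalized]),
      h _ (by simp [IsNormalized])⟩
  · rintro ⟨h₁, h₂, h₃⟩ a ha
    have ea : a = ![a 0, a 1, a 2] := by ext i; fin_cases i <;> rfl
    rcases ha with h | ⟨h, h'⟩ | ⟨h, h', h''⟩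
    · rw [ea, h]; exact h₁ _ _
    · rw [ea, h, h']; exact h₂ _
    · rw [ea, h, h', h'']; exact h₃

theorem exists_iff {p : (Fin 3 → ZMod 11) → Prop} :
    (∃ a, IsNormalized a ∧ p a) ↔
      (∃ b c, p ![1, b, c]) ∨ (∃ c, p ![0, 1, c]) ∨ p ![0, 0, 1] := by
  have h := forall_iff (p := fun a => ¬ p a)
  rw [← not_iff_not]
  push Not
  exact h

instance decidableForall {p : (Fin 3 → ZMod 11) → Prop} [DecidablePred p] :
    Decidable (∀ a, IsNormalized a → p a) :=
  decidable_of_iff' _ forall_iff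

instance decidableExists {p : (Fin 3 → ZMod 11) → Prop} [DecidablePred p] :
    Decidable (∃ a, IsNormalized a ∧ p a) :=
  decidable_of_iff' _ exists_iff

theorem eq_of_smul_eq {a b : Fin 3 → ZMod 11} (ha : IsNormalized a) (hb : IsNormalized b)
    {c : ZMod 11} (h : c • b = a) : a = b := by
  have hc0 : c ≠ 0 := by
    rintro rfl
    exact ha.ne_zero (by simpa using h.symm)
  have h0 : c * b 0 = a 0 := congrFun h 0
  have h1 : c * b 1 = a 1 := congrFun h 1
  have h2 : c * b 2 = a 2 := congrFun h 2
  have hc : c = 1 := by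
    unfold IsNormalized at ha hb
    grind
  rw [← h, hc, one_smul]

theorem exists_smul {a : Fin 3 → ZMod 11} (ha : a ≠ 0) :
    ∃ c : ZMod 11, c ≠ 0 ∧ IsNormalized (c • a) := by
  by_cases h0 : a 0 = 0
  · by_cases h1 : a 1 = 0
    · have h2 : a 2 ≠ 0 := fun h2 => ha (by ext i; fin_cases i <;> assumption)
      exact ⟨(a 2)⁻¹, inv_ne_zero h2, by simp [IsNormalized, h0, h1, h2]⟩
    · exact ⟨(a 1)⁻¹, inv_ne_zero h1, by simp [IsNormalized, h0, h1]⟩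
  · exact ⟨(a 0)⁻¹, inv_ne_zero h0, by simp [IsNormalized, h0]⟩

end IsNormalized

theorem mk_eq_mk_of_isNormalized {v w : Fin 3 → ZMod 11} (hv : IsNormalized v)
    (hw : IsNormalized w) (h : Projectivization.mk (ZMod 11) v hv.ne_zero =
      Projectivization.mk (ZMod 11) w hw.ne_zero) : v = w := by
  obtain ⟨c, hc⟩ := (Projectivization.mk_eq_mk_iff' _ _ _ _ _).1 h
  exact hv.eq_of_smul_eq hw hc

theorem pgmem_mk {v : Fin 3 → ZMod 11} (hv : v ≠ 0) (L : PGLine) :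
    PGmem (Projectivization.mk (ZMod 11) v hv) L ↔ v ∈ L.val := by
  simp [PGmem, Projectivization.submodule_mk]

/-- Every line has a normalized normal vector. -/
theorem exists_eq_lineOfNormal (L : PGLine) :
    ∃ (a : Fin 3 → ZMod 11) (ha : IsNormalized a), L = lineOfNormal a ha.ne_zero := by
  obtain ⟨W, hW⟩ := L
  have hlt : W < ⊤ := by
    refine lt_top_iff_ne_top.2 fun h => ?_
    rw [h] at hW
    simp at hW
  obtain ⟨f, hf, hle⟩ := Submodule.exists_le_ker_of_lt_top W hlt
  obtain ⟨a, rfl⟩ := (dotProductEquiv (ZMod 11) (Fin 3)).surjective f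
  have ha : a ≠ 0 := by rintro rfl; simp at hf
  obtain ⟨c, hc, hn⟩ := IsNormalized.exists_smul ha
  refine ⟨c • a, hn, Subtype.ext (Submodule.eq_of_le_of_finrank_eq (fun v hv => ?_) ?_)⟩
  · rw [mem_lineOfNormal, smul_dotProduct]
    have : a ⬝ᵥ v = 0 := by simpa using hle hv
    rw [this, smul_zero]
  · rw [hW, (lineOfNormal _ _).2]

/-- The coordinate vectors of the points of `B26`, as a list. -/
def B26coordsList : List (Fin 3 → ZMod 11) :=
  [![1, 1, 0], ![1, 2, 0], ![1, 3, 0], ![1, 4, 0], ![1, 5, 0], ![1, 6, 0], ![1, 7, 0],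
   ![1, 8, 0], ![1, 9, 0], ![1, 10, 0], ![0, 0, 1], ![1, 0, 2], ![1, 0, 6], ![1, 0, 7],
   ![1, 0, 8], ![1, 0, 10], ![1, 1, 3], ![1, 2, 3], ![1, 3, 5], ![1, 4, 4], ![1, 5, 9],
   ![1, 6, 5], ![1, 7, 1], ![1, 8, 4], ![1, 9, 1], ![1, 10, 9]]

theorem nodup_B26coordsList : B26coordsList.Nodup := by
  decide +kernel

/-- The coordinate vectors of the points of `B26`. -/
def B26coords : Finset (Fin 3 → ZMod 11) :=
  ⟨B26coordsList, nodup_B26coordsList⟩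

theorem isNormalized_of_mem_B26coords {v : Fin 3 → ZMod 11} (hv : v ∈ B26coords) :
    IsNormalized v :=
  List.forall_iff_forall_mem (l := B26coordsList).1 (by decide +kernel) v hv

theorem mem_B26_iff_exists_mk {P : PGPoint} :
    P ∈ B26 ↔ ∃ v ∈ B26coords, ∃ hv : v ≠ 0, P = Projectivization.mk (ZMod 11) v hv := by
  simp only [B26, Set.mem_insert_iff, Set.mem_singleton_iff, B26coords, Finset.mem_mk,
    Multiset.mem_coe, B26coordsList, List.exists_mem_cons_iff, List.mem_singleton,
    exists_eq_left]
  repeat' refine or_congr ?_ ?_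
  all_goals exact ⟨fun h => ⟨_, h⟩, fun ⟨_, h⟩ => h⟩

theorem mem_B26_iff {P : PGPoint} :
    P ∈ B26 ↔ ∃ (v : Fin 3 → ZMod 11) (hv : v ∈ B26coords),
      P = Projectivization.mk (ZMod 11) v (isNormalized_of_mem_B26coords hv).ne_zero := by
  rw [mem_B26_iff_exists_mk]
  exact ⟨fun ⟨v, hv, _, h⟩ => ⟨v, hv, h⟩, fun ⟨v, hv, h⟩ => ⟨v, hv, _, h⟩⟩

theorem mk_mem_B26_iff {v : Fin 3 → ZMod 11} (hv : IsNormalized v) :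
    Projectivization.mk (ZMod 11) v hv.ne_zero ∈ B26 ↔ v ∈ B26coords := by
  rw [mem_B26_iff]
  constructor
  · rintro ⟨w, hw, h⟩
    rwa [mk_eq_mk_of_isNormalized hv (isNormalized_of_mem_B26coords hw) h]
  · exact fun h => ⟨v, h, rfl⟩

theorem ncard_B26 : B26.ncard = 26 := by
  have h : (B26coords : Set (Fin 3 → ZMod 11)).ncard = B26.ncard :=
    Set.ncard_congr
      (fun v hv => Projectivization.mk (ZMod 11) v (isNormalized_of_mem_B26coords hv).ne_zero)
      (fun v hv => mem_B26_iff.2 ⟨v, hv, rfl⟩)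
      (fun v w hv hw => mk_eq_mk_of_isNormalized (isNormalized_of_mem_B26coords hv)
        (isNormalized_of_mem_B26coords hw))
      (fun P hP => by
        obtain ⟨v, hv, rfl⟩ := mem_B26_iff.1 hP
        exact ⟨v, hv, rfl⟩)
  rw [← h, Set.ncard_coe_finset]
  rfl

theorem isTangent_B26_iff {a : Fin 3 → ZMod 11} (ha : a ≠ 0) :
    IsTangent B26 (lineOfNormal a ha) ↔ (B26coords.filter (fun v => a ⬝ᵥ v = 0)).card = 1 := by
  have h : (B26coords.filter (fun v => a ⬝ᵥ v = 0) : Set (Fin 3 → ZMod 11)).ncard =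
      (secantPts B26 (lineOfNormal a ha)).ncard :=
    Set.ncard_congr
      (fun v hv => Projectivization.mk (ZMod 11) v
        (isNormalized_of_mem_B26coords (Finset.mem_filter.1 hv).1).ne_zero)
      (fun v hv => by
        have hv' := Finset.mem_filter.1 hv
        exact ⟨mem_B26_iff.2 ⟨v, hv'.1, rfl⟩,
          (pgmem_mk _ _).2 ((mem_lineOfNormal ha v).2 hv'.2)⟩)
      (fun v w hv hw => mk_eq_mk_of_isNormalized
        (isNormalized_of_mem_B26coords (Finset.mem_filter.1 hv).1)
        (isNormalized_of_mem_B26coords (Finset.mem_filter.1 hw).1))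
      (fun P hP => by
        obtain ⟨hP, hL⟩ := hP
        obtain ⟨v, hv, rfl⟩ := mem_B26_iff.1 hP
        exact ⟨v, Finset.mem_filter.2 ⟨hv, (mem_lineOfNormal ha v).1 ((pgmem_mk _ _).1 hL)⟩, rfl⟩)
  rw [IsTangent, IsSecant, ← h, Set.ncard_coe_finset]

theorem exists_mem_B26coords_dotProduct_eq_zero :
    ∀ a, IsNormalized a → ∃ v ∈ B26coords, a ⬝ᵥ v = 0 := by
  decide +kernel

theorem exists_notMem_B26coords_dotProduct_eq_zero :
    ∀ a : Fin 3 → ZMod 11, IsNormalized a →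
      ∃ v, IsNormalized v ∧ a ⬝ᵥ v = 0 ∧ v ∉ B26coords := by
  decide +kernel

/-- The normal vectors of the tangents to `B26`, listed in the order of the points of contact. -/
def B26tangentNormals : List (Fin 3 → ZMod 11) :=
  [![1, 10, 2], ![1, 5, 6], ![1, 7, 10], ![1, 8, 7], ![1, 2, 8], ![1, 9, 8], ![1, 3, 7],
   ![1, 4, 10], ![1, 6, 6], ![1, 1, 2], ![1, 0, 0], ![1, 0, 5], ![1, 0, 9], ![1, 0, 3],
   ![1, 0, 4], ![1, 0, 1], ![0, 1, 7], ![0, 1, 3], ![0, 1, 6], ![0, 1, 10], ![0, 1, 8],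
   ![0, 1, 1], ![0, 1, 4], ![0, 1, 9], ![0, 1, 2], ![0, 1, 5]]

theorem mem_B26tangentNormals_of_card_eq_one :
    ∀ a, IsNormalized a → (B26coords.filter (fun v => a ⬝ᵥ v = 0)).card = 1 →
      a ∈ B26tangentNormals := by
  decide +kernel

theorem isNormalized_and_card_eq_one_of_mem_B26tangentNormals :
    ∀ a ∈ B26tangentNormals, IsNormalized a ∧
      (B26coords.filter (fun v => a ⬝ᵥ v = 0)).card = 1 :=
  List.forall_iff_forall_mem.1 (by decide +kernel)

theorem length_filter_B26tangentNormals :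
    ∀ v ∈ B26coords, (B26tangentNormals.filter (fun a => a ⬝ᵥ v = 0)).length = 1 :=
  List.forall_iff_forall_mem (l := B26coordsList).1 (by decide +kernel)

theorem exists_unique_mem_B26tangentNormals {v : Fin 3 → ZMod 11} (hv : v ∈ B26coords) :
    ∃ a ∈ B26tangentNormals, a ⬝ᵥ v = 0 ∧
      ∀ b ∈ B26tangentNormals, b ⬝ᵥ v = 0 → b = a := by
  obtain ⟨a, ha⟩ := List.length_eq_one_iff.1 (length_filter_B26tangentNormals v hv)
  have h (b : Fin 3 → ZMod 11) : (b ∈ B26tangentNormals ∧ b ⬝ᵥ v = 0) ↔ b = a := by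
    simpa using congrArg (b ∈ ·) ha
  exact ⟨a, ((h a).2 rfl).1, ((h a).2 rfl).2, fun b hb hbv => (h b).1 ⟨hb, hbv⟩⟩

theorem isBlockingSet_B26 : IsBlockingSet B26 := by
  constructor
  · intro L
    obtain ⟨a, ha, rfl⟩ := exists_eq_lineOfNormal L
    obtain ⟨v, hv, h⟩ := exists_mem_B26coords_dotProduct_eq_zero a ha
    exact ⟨_, mem_B26_iff.2 ⟨v, hv, rfl⟩, (pgmem_mk _ _).2 ((mem_lineOfNormal _ v).2 h)⟩
  · intro L hL
    obtain ⟨a, ha, rfl⟩ := exists_eq_lineOfNormal L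
    obtain ⟨v, hv, h, hv'⟩ := exists_notMem_B26coords_dotProduct_eq_zero a ha
    exact hv' ((mk_mem_B26_iff hv).1
      (hL ((pgmem_mk hv.ne_zero _).2 ((mem_lineOfNormal _ v).2 h))))

theorem isSemioval_B26 : IsSemioval B26 := by
  intro P hP
  obtain ⟨v, hv, rfl⟩ := mem_B26_iff.1 hP
  obtain ⟨a, hmem, hav, huniq⟩ := exists_unique_mem_B26tangentNormals hv
  obtain ⟨ha, hcard⟩ := isNormalized_and_card_eq_one_of_mem_B26tangentNormals a hmem
  refine ⟨lineOfNormal a ha.ne_zero, ⟨(pgmem_mk _ _).2 ((mem_lineOfNormal _ v).2 hav),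
    (isTangent_B26_iff _).2 hcard⟩, ?_⟩
  rintro L ⟨hPL, hL⟩
  obtain ⟨b, hb, rfl⟩ := exists_eq_lineOfNormal L
  obtain rfl := huniq b (mem_B26tangentNormals_of_card_eq_one b hb ((isTangent_B26_iff _).1 hL))
    ((mem_lineOfNormal _ v).1 ((pgmem_mk _ _).1 hPL))
  rfl

theorem B26_is_26_point_blocking_semioval :
    B26.ncard = 26 ∧ IsBlockingSemioval B26 :=
  ⟨ncard_B26, isBlockingSet_B26, isSemioval_B26⟩
end
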